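/- arXiv:2103.04104 — 7 statements merged into one kernel-verified Lean document; each statement's English description precedes it below -/
import Mathlib

section
/- If g : (0,∞) → ℝ is convex and continuous, then the function φ(W) = tr(g(W)) = Σᵢ g(λᵢ(W)) is convex on the set of d×d real symmetric positive definite matrices. -/
open Matrix

/-- `φ(W) = tr(g(W)) = ∑ᵢ g(λᵢ(W))` for a Hermitian (symmetric) matrix `W`. -/
noncomputable def phi {d : ℕ} (g : ℝ → ℝ) (W : Matrix (Fin d) (Fin d) ℝ) : ℝ :=
  if h : W.IsHermitian then ∑ i, g (h.eigenvalues i) else 0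

lemma phi_diag_eq {d : ℕ} {A : Matrix (Fin d) (Fin d) ℝ} (hA : A.IsHermitian)
    (U : Matrix.unitaryGroup (Fin d) ℝ) :
    ∃ Q : Matrix.unitaryGroup (Fin d) ℝ, ∀ j,
      (star (U : Matrix (Fin d) (Fin d) ℝ) * A * (U : Matrix (Fin d) (Fin d) ℝ)) j j
        = ∑ i, (Q : Matrix (Fin d) (Fin d) ℝ) i j ^ 2 * hA.eigenvalues i := by
  refine ⟨star hA.eigenvectorUnitary * U, fun j => ?_⟩
  have h := hA.spectral_theorem
  rw [Unitary.conjStarAlgAut_apply] at h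
  have h2 : star (U : Matrix (Fin d) (Fin d) ℝ) * A * (U : Matrix (Fin d) (Fin d) ℝ)
      = star ((star hA.eigenvectorUnitary * U : Matrix.unitaryGroup (Fin d) ℝ) :
          Matrix (Fin d) (Fin d) ℝ) * diagonal hA.eigenvalues *
        ((star hA.eigenvectorUnitary * U : Matrix.unitaryGroup (Fin d) ℝ) :
          Matrix (Fin d) (Fin d) ℝ) := by
    conv_lhs => rw [h]
    simp only [Submonoid.coe_mul, Unitary.coe_star, star_mul, star_star, Matrix.mul_assoc]
    rfl
  rw [h2]
  generalize ((star hA.eigenvectorUnitary * U : Matrix.unitaryGroup (Fin d) ℝ) :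
          Matrix (Fin d) (Fin d) ℝ) = Q
  rw [Matrix.mul_apply]
  refine Finset.sum_congr rfl fun i _ => ?_
  rw [Matrix.mul_diagonal, Matrix.star_apply, star_trivial]
  ring

lemma phi_unit_col {d : ℕ} (Q : Matrix.unitaryGroup (Fin d) ℝ) (j : Fin d) :
    ∑ i, (Q : Matrix (Fin d) (Fin d) ℝ) i j ^ 2 = 1 := by
  have h := congrFun (congrFun (Matrix.mem_unitaryGroup_iff'.1 Q.2) j) j
  rw [Matrix.mul_apply, Matrix.one_apply_eq] at h
  rw [← h]
  refine Finset.sum_congr rfl fun i _ => ?_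
  rw [Matrix.star_apply, star_trivial]
  ring

lemma phi_unit_row {d : ℕ} (Q : Matrix.unitaryGroup (Fin d) ℝ) (i : Fin d) :
    ∑ j, (Q : Matrix (Fin d) (Fin d) ℝ) i j ^ 2 = 1 := by
  have h := congrFun (congrFun (Matrix.mem_unitaryGroup_iff.1 Q.2) i) i
  rw [Matrix.mul_apply, Matrix.one_apply_eq] at h
  rw [← h]
  refine Finset.sum_congr rfl fun i _ => ?_
  rw [Matrix.star_apply, star_trivial]
  ring

lemma phi_peierls {d : ℕ} (g : ℝ → ℝ) (hg : ConvexOn ℝ (Set.Ioi (0 : ℝ)) g)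
    {A : Matrix (Fin d) (Fin d) ℝ} (hA : A.PosDef) (U : Matrix.unitaryGroup (Fin d) ℝ) :
    (∀ j, 0 < (star (U : Matrix (Fin d) (Fin d) ℝ) * A * (U : Matrix (Fin d) (Fin d) ℝ)) j j) ∧
    ∑ j, g ((star (U : Matrix (Fin d) (Fin d) ℝ) * A * (U : Matrix (Fin d) (Fin d) ℝ)) j j)
      ≤ phi g A := by
  obtain ⟨Q, hQ⟩ := phi_diag_eq hA.1 U
  constructor
  · intro j
    rw [hQ j]
    exact (convex_Ioi (0 : ℝ)).sum_mem (fun i _ => sq_nonneg _) (phi_unit_col Q j)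
      (fun i _ => hA.eigenvalues_pos i)
  · rw [phi, dif_pos hA.1]
    calc _ ≤ ∑ j, ∑ i, (Q : Matrix (Fin d) (Fin d) ℝ) i j ^ 2 * g (hA.1.eigenvalues i) := by
          refine Finset.sum_le_sum fun j _ => ?_
          rw [hQ j]
          exact hg.map_sum_le (fun i _ => sq_nonneg _) (phi_unit_col Q j)
            (fun i _ => hA.eigenvalues_pos i)
      _ = _ := by
          rw [Finset.sum_comm]
          refine Finset.sum_congr rfl fun i _ => ?_
          rw [← Finset.sum_mul, phi_unit_row, one_mul]

/-- If `g` is convex and continuous on `(0, ∞)`, then `φ(W) = tr(g(W))` is convex on the set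
of real symmetric positive definite matrices. -/
theorem phi_convexOn {d : ℕ} (g : ℝ → ℝ)
    (hg_conv : ConvexOn ℝ (Set.Ioi (0 : ℝ)) g)
    (hg_cont : ContinuousOn g (Set.Ioi (0 : ℝ))) :
    ConvexOn ℝ {W : Matrix (Fin d) (Fin d) ℝ | W.PosDef} (phi g) := by
  have hconv : Convex ℝ {W : Matrix (Fin d) (Fin d) ℝ | W.PosDef} := by
    rw [convex_iff_forall_pos]
    intro A hA B hB a b ha hb _
    exact (Matrix.PosDef.smul hA ha).add (Matrix.PosDef.smul hB hb)
  refine ⟨hconv, fun A hA B hB a b ha hb hab => ?_⟩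
  have hM : (a • A + b • B).PosDef := hconv hA hB ha hb hab
  obtain ⟨pA, sA⟩ := phi_peierls g hg_conv hA hM.1.eigenvectorUnitary
  obtain ⟨pB, sB⟩ := phi_peierls g hg_conv hB hM.1.eigenvectorUnitary
  have hdiag := hM.1.conjStarAlgAut_star_eigenvectorUnitary
  rw [Unitary.conjStarAlgAut_star_apply] at hdiag
  rw [phi, dif_pos hM.1]
  generalize (hM.1.eigenvectorUnitary : Matrix (Fin d) (Fin d) ℝ) = U at *
  have key : ∀ j, hM.1.eigenvalues j =
      a • (star U * A * U) j j + b • (star U * B * U) j j := by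
    intro j
    have h := congrFun (congrFun hdiag j) j
    rw [Matrix.diagonal_apply_eq] at h
    have h2 : star U * (a • A + b • B) * U =
        a • (star U * A * U) + b • (star U * B * U) := by
      simp only [Matrix.mul_add, Matrix.add_mul, Matrix.mul_smul, Matrix.smul_mul]
    rw [h2] at h
    exact h.symm
  calc _ ≤ ∑ j, (a • g ((star U * A * U) j j) + b • g ((star U * B * U) j j)) := by
        refine Finset.sum_le_sum fun j _ => ?_
        rw [key j]
        exact hg_conv.2 (pA j) (pB j) ha hb hab
    _ ≤ _ := by
        rw [Finset.sum_add_distrib, ← Finset.smul_sum, ← Finset.smul_sum]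
        exact add_le_add (smul_le_smul_of_nonneg_left sA ha) (smul_le_smul_of_nonneg_left sB hb)
end

section
/- If g : (0,∞) → ℝ is convex and continuous, then the perspective function (v, W) ↦ v·φ(v⁻¹W) is convex on the set {(v, W) : v > 0, W real symmetric positive definite}; equivalently, ζ(u, v, W) = u − v·φ(v⁻¹W) is concave in (u, v, W) on ℝ × (0,∞) × {positive definite matrices}. -/
open Matrix

/-- `ζ(u, v, W) = u - v * φ(v⁻¹ W)`. -/
noncomputable def zeta {d : ℕ} (g : ℝ → ℝ) (u v : ℝ) (W : Matrix (Fin d) (Fin d) ℝ) : ℝ :=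
  u - v * phi g (v⁻¹ • W)

theorem peierls_aux {d : ℕ} (g : ℝ → ℝ) (hg : ConvexOn ℝ (Set.Ioi (0 : ℝ)) g)
    (A : Matrix (Fin d) (Fin d) ℝ) (hA : A.PosDef) (U : Matrix (Fin d) (Fin d) ℝ)
    (hU : U ∈ Matrix.unitaryGroup (Fin d) ℝ) :
    (∀ j, (star U * A * U) j j ∈ Set.Ioi (0 : ℝ)) ∧
      ∑ j, g ((star U * A * U) j j) ≤ phi g A := by
  obtain ⟨V, hV, hAV⟩ : ∃ V : Matrix (Fin d) (Fin d) ℝ, V ∈ Matrix.unitaryGroup (Fin d) ℝ ∧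
      A = V * diagonal hA.1.eigenvalues * star V := by
    refine ⟨hA.1.eigenvectorUnitary, hA.1.eigenvectorUnitary.2, ?_⟩
    have := hA.1.spectral_theorem
    rw [Unitary.conjStarAlgAut_apply] at this
    exact this
  set l := hA.1.eigenvalues with hl
  have hlpos : ∀ i, l i ∈ Set.Ioi (0 : ℝ) := fun i => hA.eigenvalues_pos i
  have hphi : phi g A = ∑ i, g (l i) := by rw [phi, dif_pos hA.1]
  set P := star U * V with hP
  have hPu : P ∈ Matrix.unitaryGroup (Fin d) ℝ := mul_mem (Unitary.star_mem hU) hV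
  have hrow : ∀ j, ∑ i, P j i ^ 2 = 1 := by
    intro j
    have h := congrFun (congrFun (Unitary.mem_iff.1 hPu).2 j) j
    simpa [Matrix.mul_apply, pow_two, Matrix.star_apply] using h
  have hcol : ∀ i, ∑ j, P j i ^ 2 = 1 := by
    intro j
    have h := congrFun (congrFun (Unitary.mem_iff.1 hPu).1 j) j
    simpa [Matrix.mul_apply, pow_two, Matrix.star_apply] using h
  have hent : ∀ j, (star U * A * U) j j = ∑ i, P j i ^ 2 • l i := by
    intro j
    have : star U * A * U = P * diagonal l * star P := by
      rw [hAV, hP, star_mul, star_star]; simp only [Matrix.mul_assoc]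
    rw [this, Matrix.mul_apply]
    refine Finset.sum_congr rfl fun i _ => ?_
    rw [Matrix.mul_diagonal, Matrix.star_apply]
    simp; ring
  refine ⟨fun j => ?_, ?_⟩
  · rw [hent]
    exact hg.1.sum_mem (fun i _ => sq_nonneg _) (hrow j) (fun i _ => hlpos i)
  · rw [hphi]
    calc ∑ j, g ((star U * A * U) j j) ≤ ∑ j, ∑ i, P j i ^ 2 • g (l i) := by
          refine Finset.sum_le_sum fun j _ => ?_
          rw [hent]
          exact hg.map_sum_le (fun i _ => sq_nonneg _) (hrow j) (fun i _ => hlpos i)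
      _ = ∑ i, g (l i) := by
          rw [Finset.sum_comm]
          refine Finset.sum_congr rfl fun i _ => ?_
          rw [← Finset.sum_smul, hcol, one_smul]

theorem posDef_comb_aux {d : ℕ} {A B : Matrix (Fin d) (Fin d) ℝ} (hA : A.PosDef) (hB : B.PosDef)
    {a b : ℝ} (ha : 0 ≤ a) (hb : 0 ≤ b) (hab : a + b = 1) : (a • A + b • B).PosDef := by
  rcases ha.eq_or_lt with h | h
  · subst h
    have : b = 1 := by linarith
    subst this
    simpa using hB
  · exact (hA.smul h).add_posSemidef (hB.posSemidef.smul hb)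

theorem phi_comb_aux {d : ℕ} (g : ℝ → ℝ) (hg : ConvexOn ℝ (Set.Ioi (0 : ℝ)) g)
    {A B : Matrix (Fin d) (Fin d) ℝ} (hA : A.PosDef) (hB : B.PosDef)
    {a b : ℝ} (ha : 0 ≤ a) (hb : 0 ≤ b) (hab : a + b = 1) :
    phi g (a • A + b • B) ≤ a * phi g A + b * phi g B := by
  have hC := posDef_comb_aux hA hB ha hb hab
  set C := a • A + b • B with hCdef
  set U : Matrix (Fin d) (Fin d) ℝ := (hC.1.eigenvectorUnitary).1 with hUdef
  have hU : U ∈ Matrix.unitaryGroup (Fin d) ℝ := hC.1.eigenvectorUnitary.2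
  obtain ⟨pA, sA⟩ := peierls_aux g hg A hA U hU
  obtain ⟨pB, sB⟩ := peierls_aux g hg B hB U hU
  have hdiag : star U * C * U = diagonal hC.1.eigenvalues := by
    have := hC.1.spectral_theorem
    rw [Unitary.conjStarAlgAut_apply] at this
    have h2 : C = U * diagonal hC.1.eigenvalues * star U := this
    have h3 : star U * U = 1 := (Unitary.mem_iff.1 hU).1
    calc star U * C * U = star U * (U * diagonal hC.1.eigenvalues * star U) * U := by rw [← h2]
      _ = (star U * U) * diagonal hC.1.eigenvalues * (star U * U) := by
        simp only [Matrix.mul_assoc]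
      _ = _ := by rw [h3]; simp
  have hev : ∀ j, hC.1.eigenvalues j
      = a • (star U * A * U) j j + b • (star U * B * U) j j := by
    intro j
    have h := congrFun (congrFun hdiag j) j
    rw [Matrix.diagonal_apply_eq] at h
    rw [← h, hCdef]
    simp [Matrix.mul_add, Matrix.add_mul]
  have hphi : phi g C = ∑ i, g (hC.1.eigenvalues i) := by rw [phi, dif_pos hC.1]
  rw [hphi]
  calc ∑ i, g (hC.1.eigenvalues i)
      ≤ ∑ i, (a • g ((star U * A * U) i i) + b • g ((star U * B * U) i i)) := by
        refine Finset.sum_le_sum fun j _ => ?_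
        rw [hev]
        exact hg.2 (pA j) (pB j) ha hb hab
    _ = a * ∑ i, g ((star U * A * U) i i) + b * ∑ i, g ((star U * B * U) i i) := by
        simp [Finset.sum_add_distrib, Finset.mul_sum]
    _ ≤ _ := add_le_add (mul_le_mul_of_nonneg_left sA ha) (mul_le_mul_of_nonneg_left sB hb)

theorem persp_aux {d : ℕ} (g : ℝ → ℝ) (hg : ConvexOn ℝ (Set.Ioi (0 : ℝ)) g)
    {A B : Matrix (Fin d) (Fin d) ℝ} (hA : A.PosDef) (hB : B.PosDef)
    {s t : ℝ} (hs : 0 < s) (ht : 0 < t)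
    {a b : ℝ} (ha : 0 ≤ a) (hb : 0 ≤ b) (hab : a + b = 1) :
    0 < a * s + b * t ∧ (a * s + b * t) * phi g ((a * s + b * t)⁻¹ • (a • A + b • B))
      ≤ a * (s * phi g (s⁻¹ • A)) + b * (t * phi g (t⁻¹ • B)) := by
  have hv : 0 < a * s + b * t := (convex_Ioi (0 : ℝ)) hs ht ha hb hab
  refine ⟨hv, ?_⟩
  set v := a * s + b * t with hvdef
  have h := phi_comb_aux g hg (hA.smul (inv_pos.2 hs)) (hB.smul (inv_pos.2 ht))
    (a := a * s / v) (b := b * t / v) (by positivity) (by positivity)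
    (by rw [← add_div, ← hvdef, div_self hv.ne'])
  have e : (a * s / v) • s⁻¹ • A + (b * t / v) • t⁻¹ • B = v⁻¹ • (a • A + b • B) := by
    rw [smul_add, smul_smul, smul_smul, smul_smul, smul_smul]
    congr 2 <;> field_simp
  rw [e] at h
  calc v * phi g (v⁻¹ • (a • A + b • B)) ≤ v * _ := mul_le_mul_of_nonneg_left h hv.le
    _ = _ := by field_simp

/-- If `g` is convex and continuous on `(0, ∞)`, then the perspective function
`(v, W) ↦ v * φ(v⁻¹ W)` is convex on `{(v, W) : v > 0, W ≻ 0}`; equivalently,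
`ζ(u, v, W) = u - v * φ(v⁻¹ W)` is concave on `ℝ × (0, ∞) × {W ≻ 0}`. -/
theorem perspective_convexOn_and_zeta_concaveOn {d : ℕ} (g : ℝ → ℝ)
    (hg_conv : ConvexOn ℝ (Set.Ioi (0 : ℝ)) g)
    (hg_cont : ContinuousOn g (Set.Ioi (0 : ℝ))) :
    ConvexOn ℝ {p : ℝ × Matrix (Fin d) (Fin d) ℝ | 0 < p.1 ∧ p.2.PosDef}
      (fun p => p.1 * phi g (p.1⁻¹ • p.2)) ∧
    ConcaveOn ℝ {p : ℝ × ℝ × Matrix (Fin d) (Fin d) ℝ | 0 < p.2.1 ∧ p.2.2.PosDef}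
      (fun p => zeta g p.1 p.2.1 p.2.2) := by
  refine ⟨⟨?_, ?_⟩, ⟨?_, ?_⟩⟩
  · rintro ⟨s, A⟩ ⟨hs, hA⟩ ⟨t, B⟩ ⟨ht, hB⟩ a b ha hb hab
    exact ⟨(persp_aux g hg_conv hA hB hs ht ha hb hab).1, posDef_comb_aux hA hB ha hb hab⟩
  · rintro ⟨s, A⟩ ⟨hs, hA⟩ ⟨t, B⟩ ⟨ht, hB⟩ a b ha hb hab
    exact (persp_aux g hg_conv hA hB hs ht ha hb hab).2
  · rintro ⟨x, s, A⟩ ⟨hs, hA⟩ ⟨y, t, B⟩ ⟨ht, hB⟩ a b ha hb hab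
    exact ⟨(persp_aux g hg_conv hA hB hs ht ha hb hab).1, posDef_comb_aux hA hB ha hb hab⟩
  · rintro ⟨x, s, A⟩ ⟨hs, hA⟩ ⟨y, t, B⟩ ⟨ht, hB⟩ a b ha hb hab
    have h := (persp_aux g hg_conv hA hB hs ht ha hb hab).2
    simp only [zeta, smul_eq_mul, Prod.smul_mk, Prod.mk_add_mk]
    linarith
end

section
/- If g : (0,∞) → ℝ is convex and continuous, then the set K = cl{(u, v, W) ∈ ℝ × (0,∞) × 𝕊ᵈ_≻ : ζ(u, v, W) ≥ 0} (closure taken in ℝ × ℝ × 𝕊ᵈ) is a closed convex cone with nonempty interior: it is closed, closed under addition, closed under multiplication by nonnegative scalars, and its interior is nonempty. -/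
open Matrix

/-- The space `𝕊ᵈ` of `d × d` real symmetric matrices, as the submodule of self-adjoint
matrices (over `ℝ`, self-adjoint means symmetric). -/
noncomputable abbrev SymMat (d : ℕ) : Submodule ℝ (Matrix (Fin d) (Fin d) ℝ) :=
  selfAdjoint.submodule ℝ (Matrix (Fin d) (Fin d) ℝ)

def qf {d : ℕ} (A : Matrix (Fin d) (Fin d) ℝ) (x : EuclideanSpace ℝ (Fin d)) : ℝ :=
  x.ofLp ⬝ᵥ (A *ᵥ x.ofLp)

lemma inner_mulVec {d : ℕ} {A : Matrix (Fin d) (Fin d) ℝ} (hA : A.IsHermitian)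
    (x : EuclideanSpace ℝ (Fin d)) (j : Fin d) :
    inner ℝ (hA.eigenvectorBasis j) (WithLp.toLp 2 (A *ᵥ x.ofLp)) =
      hA.eigenvalues j * inner ℝ (hA.eigenvectorBasis j) x := by
  have h := hA.mulVec_eigenvectorBasis j
  have hT : Aᵀ = A := by rw [← conjTranspose_eq_transpose_of_trivial]; exact hA.eq
  simp only [EuclideanSpace.inner_eq_star_dotProduct, star_trivial]
  rw [dotProduct_comm, dotProduct_mulVec, ← mulVec_transpose, hT, h, smul_dotProduct,
    dotProduct_comm]
  simp

lemma qf_eq {d : ℕ} {A : Matrix (Fin d) (Fin d) ℝ} (hA : A.IsHermitian)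
    (x : EuclideanSpace ℝ (Fin d)) :
    qf A x = ∑ j, (inner ℝ (hA.eigenvectorBasis j) x) ^ 2 * hA.eigenvalues j := by
  have h1 : qf A x = inner ℝ x (WithLp.toLp 2 (A *ᵥ x.ofLp)) := by
    simp [qf, EuclideanSpace.inner_eq_star_dotProduct, dotProduct_comm]
  rw [h1, ← hA.eigenvectorBasis.sum_inner_mul_inner]
  refine Finset.sum_congr rfl fun j _ => ?_
  rw [inner_mulVec, real_inner_comm]
  ring

lemma sum_sq_one {d : ℕ} (b : OrthonormalBasis (Fin d) ℝ (EuclideanSpace ℝ (Fin d)))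
    (x : EuclideanSpace ℝ (Fin d)) (hx : ‖x‖ = 1) : ∑ j, (inner ℝ (b j) x) ^ 2 = 1 := by
  rw [b.sum_sq_inner_right, hx, one_pow]

lemma peierls {d : ℕ} {g : ℝ → ℝ} (hg : ConvexOn ℝ (Set.Ioi (0 : ℝ)) g)
    {A : Matrix (Fin d) (Fin d) ℝ} (hA : A.PosDef)
    (b : OrthonormalBasis (Fin d) ℝ (EuclideanSpace ℝ (Fin d))) :
    (∀ i, 0 < qf A (b i)) ∧ ∑ i, g (qf A (b i)) ≤ phi g A := by
  have hH := hA.isHermitian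
  have hb : ∀ i, ‖b i‖ = 1 := fun i => b.norm_eq_one i
  constructor
  · intro i
    have hne : (b i).ofLp ≠ 0 := by
      intro h
      have h0 : b i = 0 := by ext k; simp [h]
      have := hb i
      simp [h0] at this
    simpa [qf] using hA.dotProduct_mulVec_pos hne
  · rw [phi, dif_pos hH]
    calc ∑ i, g (qf A (b i)) ≤ ∑ i, ∑ j, (inner ℝ (hH.eigenvectorBasis j) (b i)) ^ 2 * g (hH.eigenvalues j) := by
          refine Finset.sum_le_sum fun i _ => ?_
          rw [qf_eq hH]
          have := hg.map_sum_le (t := Finset.univ)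
            (w := fun j => (inner ℝ (hH.eigenvectorBasis j) (b i)) ^ 2)
            (p := hH.eigenvalues) (fun _ _ => sq_nonneg _) (sum_sq_one _ _ (hb i))
            (fun j _ => hA.eigenvalues_pos j)
          simpa using this
      _ = ∑ j, g (hH.eigenvalues j) := by
          rw [Finset.sum_comm]
          refine Finset.sum_congr rfl fun j _ => ?_
          rw [← Finset.sum_mul]
          have := sum_sq_one b (hH.eigenvectorBasis j) (hH.eigenvectorBasis.norm_eq_one j)
          simp only [real_inner_comm] at this ⊢
          rw [this, one_mul]

lemma phi_convex {d : ℕ} {g : ℝ → ℝ} (hg : ConvexOn ℝ (Set.Ioi (0 : ℝ)) g)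
    {A B : Matrix (Fin d) (Fin d) ℝ} (hA : A.PosDef) (hB : B.PosDef) {a b : ℝ}
    (ha : 0 < a) (hb : 0 < b) (hab : a + b = 1) :
    phi g (a • A + b • B) ≤ a * phi g A + b * phi g B := by
  have hC : (a • A + b • B).PosDef := (hA.smul ha).add (hB.smul hb)
  have hH := hC.isHermitian
  obtain ⟨pA, sA⟩ := peierls hg hA hH.eigenvectorBasis
  obtain ⟨pB, sB⟩ := peierls hg hB hH.eigenvectorBasis
  have key : ∀ i, hH.eigenvalues i =
      a • qf A (hH.eigenvectorBasis i) + b • qf B (hH.eigenvectorBasis i) := by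
    intro i
    rw [hH.eigenvalues_eq]
    simp [qf, add_mulVec, smul_mulVec, dotProduct_add, dotProduct_smul]
  rw [phi, dif_pos hH]
  calc _ ≤ ∑ i, (a * g (qf A (hH.eigenvectorBasis i)) + b * g (qf B (hH.eigenvectorBasis i))) := by
        refine Finset.sum_le_sum fun i _ => ?_
        rw [key]
        exact hg.2 (pA i) (pB i) ha.le hb.le hab
    _ ≤ _ := by
        rw [Finset.sum_add_distrib, ← Finset.mul_sum, ← Finset.mul_sum]
        gcongr

lemma eig_bound {d : ℕ} {A : Matrix (Fin d) (Fin d) ℝ} (hA : A.IsHermitian)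
    (h : ∀ k, |A k k - 1| + ∑ j ∈ Finset.univ.erase k, |A k j| < 1 / 2) (i : Fin d) :
    hA.eigenvalues i ∈ Set.Icc (1 / 2 : ℝ) (3 / 2) := by
  have hev : Module.End.HasEigenvalue (Matrix.toLin' A) (hA.eigenvalues i) := by
    refine Module.End.hasEigenvalue_of_hasEigenvector
      (x := (hA.eigenvectorBasis i).ofLp) ⟨?_, ?_⟩
    · rw [Module.End.mem_eigenspace_iff, Matrix.toLin'_apply]
      exact hA.mulVec_eigenvectorBasis i
    · intro h0
      have h1 : hA.eigenvectorBasis i = 0 := by ext k; simp [h0]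
      have := hA.eigenvectorBasis.norm_eq_one i
      simp [h1] at this
  obtain ⟨k, hk⟩ := eigenvalue_mem_ball hev
  rw [Metric.mem_closedBall, Real.dist_eq] at hk
  simp only [Real.norm_eq_abs] at hk
  have h2 := h k
  have h3 := abs_le.1 hk
  have h4 := abs_le.1 (le_refl |A k k - 1|)
  constructor <;> linarith [h3.1, h3.2, h4.1, h4.2]

/-- If `g` is convex and continuous on `(0, ∞)`, the set
`K = cl {(u, v, W) ∈ ℝ × (0,∞) × 𝕊ᵈ_≻ : ζ(u, v, W) ≥ 0}` (closure in `ℝ × ℝ × 𝕊ᵈ`)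
is a closed convex cone with nonempty interior. -/
theorem K_closed_convex_cone_nonempty_interior {d : ℕ} (g : ℝ → ℝ)
    (hg_conv : ConvexOn ℝ (Set.Ioi (0 : ℝ)) g)
    (hg_cont : ContinuousOn g (Set.Ioi (0 : ℝ))) :
    let K : Set (ℝ × ℝ × SymMat d) := closure
      {p : ℝ × ℝ × SymMat d | 0 < p.2.1 ∧ (p.2.2 : Matrix (Fin d) (Fin d) ℝ).PosDef ∧
        0 ≤ zeta g p.1 p.2.1 (p.2.2 : Matrix (Fin d) (Fin d) ℝ)}
    IsClosed K ∧
    (∀ x ∈ K, ∀ y ∈ K, x + y ∈ K) ∧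
    (∀ c : ℝ, 0 ≤ c → ∀ x ∈ K, c • x ∈ K) ∧
    (interior K).Nonempty := by
  intro K
  set S : Set (ℝ × ℝ × SymMat d) :=
    {p : ℝ × ℝ × SymMat d | 0 < p.2.1 ∧ (p.2.2 : Matrix (Fin d) (Fin d) ℝ).PosDef ∧
        0 ≤ zeta g p.1 p.2.1 (p.2.2 : Matrix (Fin d) (Fin d) ℝ)} with hS
  have hK : K = closure S := rfl
  have hadd : ∀ x ∈ S, ∀ y ∈ S, x + y ∈ S := by
    rintro ⟨u, v, W⟩ ⟨hv, hW, hz⟩ ⟨u', v', W'⟩ ⟨hv', hW', hz'⟩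
    simp only at hv hW hz hv' hW' hz'
    have hs : 0 < v + v' := add_pos hv hv'
    refine ⟨hs, hW.add hW', ?_⟩
    simp only [zeta, Prod.mk_add_mk, Submodule.coe_add] at hz hz' ⊢
    have := phi_convex hg_conv (hW.smul (inv_pos.2 hv)) (hW'.smul (inv_pos.2 hv'))
      (a := v / (v + v')) (b := v' / (v + v')) (by positivity) (by positivity)
      (by field_simp)
    have e : (v / (v + v')) • v⁻¹ • (W : Matrix (Fin d) (Fin d) ℝ) +
        (v' / (v + v')) • v'⁻¹ • (W' : Matrix (Fin d) (Fin d) ℝ) =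
        (v + v')⁻¹ • ((W : Matrix (Fin d) (Fin d) ℝ) + W') := by
      rw [smul_smul, smul_smul, smul_add]
      congr 2 <;> field_simp
    rw [e] at this
    have h2 := mul_le_mul_of_nonneg_left this hs.le
    have h3 : ∀ P Q : ℝ, (v + v') * (v / (v + v') * P + v' / (v + v') * Q) = v * P + v' * Q := by
      intro P Q; field_simp
    rw [h3] at h2
    linarith
  have hsmul : ∀ c : ℝ, 0 < c → ∀ x ∈ S, c • x ∈ S := by
    rintro c hc ⟨u, v, W⟩ ⟨hv, hW, hz⟩
    simp only at hv hW hz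
    refine ⟨mul_pos hc hv, hW.smul hc, ?_⟩
    simp only [zeta, Prod.smul_mk, Submodule.coe_smul, smul_eq_mul] at hz ⊢
    have e : (c * v)⁻¹ • c • (W : Matrix (Fin d) (Fin d) ℝ) = v⁻¹ • (W : Matrix (Fin d) (Fin d) ℝ) := by
      rw [smul_smul]; congr 1; field_simp
    rw [e]
    have := mul_nonneg hc.le hz
    linarith
  refine ⟨isClosed_closure, ?_, ?_, ?_⟩
  · intro x hx y hy
    exact map_mem_closure₂ continuous_add hx hy hadd
  · intro c hc x hx
    have hpos : ∀ c : ℝ, 0 < c → c • x ∈ K := fun c hc =>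
      map_mem_closure (continuous_const_smul c) hx (hsmul c hc)
    rcases hc.eq_or_lt with rfl | hc
    · have ht : Filter.Tendsto (fun c : ℝ => c • x) (nhdsWithin 0 (Set.Ioi 0))
          (nhds ((0 : ℝ) • x)) :=
        ((continuous_id.smul continuous_const).tendsto (0 : ℝ)).mono_left nhdsWithin_le_nhds
      refine (isClosed_closure : IsClosed K).mem_of_tendsto ht ?_
      filter_upwards [self_mem_nhdsWithin] with c hc using hpos c hc
    · exact hpos c hc
  · obtain ⟨M, hM⟩ := (isCompact_Icc (a := (1 / 2 : ℝ)) (b := 3 / 2)).bddAbove_image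
      (hg_cont.mono (fun x hx => lt_of_lt_of_le (by norm_num) hx.1))
    have hM' : ∀ x ∈ Set.Icc (1 / 2 : ℝ) (3 / 2), g x ≤ M := fun x hx => hM ⟨x, hx, rfl⟩
    let N : ℝ × ℝ × SymMat d → Fin d → ℝ := fun p k =>
      |p.2.1⁻¹ * (p.2.2 : Matrix (Fin d) (Fin d) ℝ) k k - 1| +
        ∑ j ∈ Finset.univ.erase k, |p.2.1⁻¹ * (p.2.2 : Matrix (Fin d) (Fin d) ℝ) k j|
    let x₀ : ℝ × ℝ × SymMat d := (d * M + 1, 1, ⟨1, IsSelfAdjoint.one _⟩)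
    refine ⟨x₀, interior_mono subset_closure (mem_interior_iff_mem_nhds.2 ?_)⟩
    have hent : ∀ k j, ContinuousAt
        (fun p : ℝ × ℝ × SymMat d => p.2.1⁻¹ * (p.2.2 : Matrix (Fin d) (Fin d) ℝ) k j) x₀ := by
      intro k j
      have h1 : ContinuousAt (fun p : ℝ × ℝ × SymMat d => p.2.1⁻¹) x₀ :=
        ContinuousAt.inv₀ (by fun_prop) (by simp [x₀])
      have h2 : Continuous (fun p : ℝ × ℝ × SymMat d => (p.2.2 : Matrix (Fin d) (Fin d) ℝ) k j) :=
        (continuous_subtype_val.comp (continuous_snd.comp continuous_snd)).matrix_elem k j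
      exact h1.mul h2.continuousAt
    have hN : ∀ᶠ p in nhds x₀, ∀ k, N p k < 1 / 2 := by
      rw [Filter.eventually_all]
      intro k
      have hc : ContinuousAt (fun p => N p k) x₀ := by
        refine ContinuousAt.add ((hent k k).sub continuousAt_const).abs ?_
        exact tendsto_finsetSum _ fun j _ => (hent k j).abs
      refine hc.eventually_lt continuousAt_const ?_
      have : ∑ j ∈ Finset.univ.erase k, |(1 : Matrix (Fin d) (Fin d) ℝ) k j| = 0 := by
        refine Finset.sum_eq_zero fun j hj => ?_
        rw [Matrix.one_apply_ne (Finset.ne_of_mem_erase hj).symm, abs_zero]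
      simp only [N, x₀, inv_one, one_mul, this, Matrix.one_apply_eq]
      norm_num
    have hv : ∀ᶠ p in nhds x₀, 0 < p.2.1 :=
      continuousAt_const.eventually_lt (by fun_prop) (by simp [x₀])
    have hu : ∀ᶠ p in nhds x₀, p.2.1 * (d * M) < p.1 :=
      ContinuousAt.eventually_lt (by fun_prop) (by fun_prop) (by simp [x₀])
    filter_upwards [hN, hv, hu] with p h1 h2 h3
    have hH : (p.2.1⁻¹ • (p.2.2 : Matrix (Fin d) (Fin d) ℝ)).IsHermitian := (p.2.1⁻¹ • p.2.2).2
    have hb := eig_bound hH (by simpa [N] using h1)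
    have hP : (p.2.1⁻¹ • (p.2.2 : Matrix (Fin d) (Fin d) ℝ)).PosDef :=
      hH.posDef_iff_eigenvalues_pos.2 fun i => lt_of_lt_of_le (by norm_num) (hb i).1
    refine ⟨h2, ?_, ?_⟩
    · have := hP.smul h2
      rwa [smul_inv_smul₀ h2.ne'] at this
    · have h4 : phi g (p.2.1⁻¹ • (p.2.2 : Matrix (Fin d) (Fin d) ℝ)) ≤ d * M := by
        rw [phi, dif_pos hH]
        calc _ ≤ ∑ _i : Fin d, M := Finset.sum_le_sum fun i _ => hM' _ (hb i)
          _ = d * M := by simp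
      have := mul_le_mul_of_nonneg_left h4 h2.le
      simp only [zeta]
      linarith
end

section
/- Let v > 0 and q ∈ ℝ with q ≤ v, let W be a d×d real symmetric positive definite matrix and R a d×d real symmetric matrix with W − R positive semidefinite, and let t ≥ 0. Set ξ = v⁻¹(R − q·v⁻¹·W), A(t) = v⁻¹W + tI, and ρ(t) = A(t)^{−1/2} ξ A(t)^{−1/2}. Then (1 − q·v⁻¹)·I − ρ(t) is positive semidefinite, i.e., ρ(t) ⪯ (1 − q/v)·I in the Loewner order. -/
open Matrix
open scoped Classical

open scoped MatrixOrder in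
/-- `A^(-1/2)`: the inverse of the unique positive semidefinite square root of `A`
(junk value `0` if `A` is not positive semidefinite). -/
noncomputable def invSqrt {d : ℕ} (A : Matrix (Fin d) (Fin d) ℝ) : Matrix (Fin d) (Fin d) ℝ :=
  if h : A.PosSemidef then (CFC.sqrt A)⁻¹ else 0

open scoped MatrixOrder in
lemma invSqrt_spec {d : ℕ} (A : Matrix (Fin d) (Fin d) ℝ) (hA : A.PosDef) :
    ∃ S : Matrix (Fin d) (Fin d) ℝ, Sᴴ = S ∧ S * A * S = 1 ∧ invSqrt A = S := by
  have h0 : 0 ≤ A := hA.posSemidef.nonneg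
  have hs : CFC.sqrt A * CFC.sqrt A = A := CFC.sqrt_mul_sqrt_self A h0
  have hH : (CFC.sqrt A)ᴴ = CFC.sqrt A := (CFC.sqrt_nonneg A).posSemidef.isHermitian
  have hu : IsUnit (CFC.sqrt A).det := by
    have := (Matrix.isUnit_iff_isUnit_det A).mp hA.isUnit
    rw [← hs, det_mul] at this
    exact isUnit_of_mul_isUnit_left this
  refine ⟨(CFC.sqrt A)⁻¹, ?_, ?_, ?_⟩
  · rw [conjTranspose_nonsing_inv, hH]
  · conv_lhs => rw [← hs]
    rw [hs]
    nth_rewrite 2 [← hs]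
    rw [← mul_assoc, nonsing_inv_mul _ hu, one_mul, mul_nonsing_inv _ hu]
  · simp [invSqrt, hA.posSemidef]

/-- With `ξ = v⁻¹(R - q v⁻¹ W)`, `A(t) = v⁻¹ W + t I`, `ρ(t) = A(t)^(-1/2) ξ A(t)^(-1/2)`,
we have `ρ(t) ⪯ (1 - q/v) I` in the Loewner order. -/
theorem rho_le_one_sub_qv_smul_one {d : ℕ} (v q t : ℝ) (W R : Matrix (Fin d) (Fin d) ℝ)
    (hv : 0 < v) (hq : q ≤ v) (hW : W.PosDef) (hR : R.IsSymm)
    (hWR : (W - R).PosSemidef) (ht : 0 ≤ t) :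
    ((1 - q * v⁻¹) • (1 : Matrix (Fin d) (Fin d) ℝ) -
      invSqrt (v⁻¹ • W + t • 1) * (v⁻¹ • (R - (q * v⁻¹) • W)) *
        invSqrt (v⁻¹ • W + t • 1)).PosSemidef := by
  have hc : 0 ≤ 1 - q * v⁻¹ := by
    rw [sub_nonneg, ← div_eq_mul_inv, div_le_one hv]; exact hq
  have hvi : 0 < v⁻¹ := inv_pos.mpr hv
  have hA : (v⁻¹ • W + t • (1 : Matrix (Fin d) (Fin d) ℝ)).PosDef :=
    (hW.smul hvi).add_posSemidef (PosSemidef.one.smul ht)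
  obtain ⟨S, hSH, hS1, hS⟩ := invSqrt_spec _ hA
  rw [hS]
  have hM : (v⁻¹ • (W - R) + ((1 - q * v⁻¹) * t) • (1 : Matrix (Fin d) (Fin d) ℝ)).PosSemidef :=
    (hWR.smul hvi.le).add (PosSemidef.one.smul (mul_nonneg hc ht))
  have h2 := hM.conjTranspose_mul_mul_same S
  rw [hSH] at h2
  have e : v⁻¹ • (W - R) + ((1 - q * v⁻¹) * t) • (1 : Matrix (Fin d) (Fin d) ℝ)
      = (1 - q * v⁻¹) • (v⁻¹ • W + t • (1 : Matrix (Fin d) (Fin d) ℝ))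
        - v⁻¹ • (R - (q * v⁻¹) • W) := by
    module
  rw [e, mul_sub, sub_mul, mul_smul_comm, smul_mul_assoc, hS1] at h2
  exact h2
end

section
/- Let v > 0 and q ∈ ℝ with q ≤ v, let W be a d×d real symmetric positive definite matrix and R a d×d real symmetric matrix with W − R positive semidefinite, and let t ≥ 0. Set ξ = v⁻¹(R − q·v⁻¹·W), A(t) = v⁻¹W + tI, and ρ(t) = A(t)^{−1/2} ξ A(t)^{−1/2}. Then 3(v − q)·tr(ρ(t)²) − 2v·tr(ρ(t)³) ≥ 0. -/
open Matrix
open scoped Classical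

open scoped MatrixOrder in
theorem invSqrt_props {d : ℕ} (A : Matrix (Fin d) (Fin d) ℝ) (hA : A.PosDef) :
    (invSqrt A)ᵀ = invSqrt A ∧ invSqrt A * A * invSqrt A = 1 := by
  have h := hA.posSemidef
  rw [invSqrt, dif_pos h]
  have hS : (CFC.sqrt A).PosSemidef := Matrix.nonneg_iff_posSemidef.mp (CFC.sqrt_nonneg A)
  have hSS : CFC.sqrt A * CFC.sqrt A = A :=
    CFC.sqrt_mul_sqrt_self A (Matrix.nonneg_iff_posSemidef.mpr h)
  have hdet : IsUnit (CFC.sqrt A).det := by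
    have h1 : (CFC.sqrt A).det * (CFC.sqrt A).det = A.det := by rw [← Matrix.det_mul, hSS]
    have h2 := hA.det_pos
    rw [isUnit_iff_ne_zero]
    intro h0
    rw [h0] at h1
    simp at h1
    linarith
  have hT : (CFC.sqrt A)ᵀ = CFC.sqrt A := by simpa using hS.isHermitian.eq
  generalize CFC.sqrt A = S at *
  refine ⟨by rw [Matrix.transpose_nonsing_inv, hT], ?_⟩
  rw [← hSS, Matrix.nonsing_inv_mul_cancel_left _ _ hdet, Matrix.mul_nonsing_inv _ hdet]

/-- With `ξ = v⁻¹(R - q v⁻¹ W)`, `A(t) = v⁻¹ W + t I`, `ρ(t) = A(t)^(-1/2) ξ A(t)^(-1/2)`,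
we have `3(v - q) tr(ρ(t)²) - 2v tr(ρ(t)³) ≥ 0`. -/
theorem trace_inequality {d : ℕ} (v q t : ℝ) (W R : Matrix (Fin d) (Fin d) ℝ)
    (hv : 0 < v) (hq : q ≤ v) (hW : W.PosDef) (hR : R.IsSymm)
    (hWR : (W - R).PosSemidef) (ht : 0 ≤ t) :
    let ρ : Matrix (Fin d) (Fin d) ℝ :=
      invSqrt (v⁻¹ • W + t • 1) * (v⁻¹ • (R - (q * v⁻¹) • W)) * invSqrt (v⁻¹ • W + t • 1)
    0 ≤ 3 * (v - q) * (ρ * ρ).trace - 2 * v * (ρ * ρ * ρ).trace := by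
  intro ρ
  set A : Matrix (Fin d) (Fin d) ℝ := v⁻¹ • W + t • 1 with hA
  have hApd : A.PosDef := by
    apply Matrix.PosDef.add_posSemidef
    · exact hW.smul (inv_pos.mpr hv)
    · exact Matrix.PosSemidef.one.smul ht
  obtain ⟨B, hB, hBs, hBA⟩ : ∃ B, invSqrt A = B ∧ Bᵀ = B ∧ B * A * B = 1 := by
    refine ⟨_, rfl, ?_⟩
    exact invSqrt_props A hApd
  have hρdef : ρ = B * (v⁻¹ • (R - (q * v⁻¹) • W)) * B := by rw [← hB]
  have hWs : Wᵀ = W := by simpa using hW.isHermitian.eq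
  have hρs : ρᵀ = ρ := by
    rw [hρdef]
    simp [Matrix.transpose_mul, hBs, hWs, hR.eq, Matrix.mul_assoc]
  clear_value ρ
  set c : ℝ := (v - q) / v with hc
  have hc0 : 0 ≤ c := div_nonneg (by linarith) hv.le
  have hvc : v - q = v * c := by rw [hc]; field_simp
  have key : c • A - v⁻¹ • (R - (q * v⁻¹) • W) = v⁻¹ • (W - R) + (c * t) • 1 := by
    have h1 : c * v⁻¹ + v⁻¹ * (q * v⁻¹) = v⁻¹ := by rw [hc]; field_simp; ring
    have h2 : v⁻¹ • W = (c * v⁻¹ + v⁻¹ * (q * v⁻¹)) • W := by rw [h1]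
    rw [smul_sub v⁻¹ W R, h2, hA]
    module
  have hpsd : (c • A - v⁻¹ • (R - (q * v⁻¹) • W)).PosSemidef := by
    rw [key]
    exact (hWR.smul (inv_pos.mpr hv).le).add (Matrix.PosSemidef.one.smul (mul_nonneg hc0 ht))
  have hM := (hpsd.conjTranspose_mul_mul_same (B * ρ)).trace_nonneg
  have hE : (B * ρ)ᴴ * (c • A - v⁻¹ • (R - (q * v⁻¹) • W)) * (B * ρ)
      = c • (ρ * ρ) - ρ * ρ * ρ := by
    have h1 : (B * ρ)ᴴ = ρ * B := by
      rw [Matrix.conjTranspose_eq_transpose_of_trivial, Matrix.transpose_mul, hBs, hρs]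
    rw [h1]
    have h2 : ρ * B * (c • A - v⁻¹ • (R - (q * v⁻¹) • W)) * (B * ρ)
      = c • (ρ * (B * A * B) * ρ) - ρ * (B * (v⁻¹ • (R - (q * v⁻¹) • W)) * B) * ρ := by
      generalize v⁻¹ • (R - (q * v⁻¹) • W) = X
      simp only [Matrix.mul_sub, Matrix.sub_mul, Matrix.mul_smul, Matrix.smul_mul,
        Matrix.mul_assoc]
    rw [h2, hBA, ← hρdef, Matrix.mul_one]
  rw [hE, Matrix.trace_sub, Matrix.trace_smul, smul_eq_mul] at hM
  have hsq : 0 ≤ (ρ * ρ).trace := by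
    have := (Matrix.posSemidef_conjTranspose_mul_self ρ).trace_nonneg
    rwa [Matrix.conjTranspose_eq_transpose_of_trivial, hρs] at this
  rw [hvc]
  have e1 := mul_nonneg hv.le hM
  have e2 := mul_nonneg hv.le (mul_nonneg hc0 hsq)
  nlinarith
end

section
/- Let Φ be a real-valued function that is C² (twice continuously differentiable) on an open subset of the d×d real symmetric matrices containing v⁻¹W, where v > 0 and W is a d×d real symmetric matrix. Let u, p, q ∈ ℝ and let R be a d×d real symmetric matrix, and set ξ = v⁻¹(R − q·v⁻¹·W). Then the second derivative at t = 0 of the function t ↦ (u + t·p) − (v + t·q)·Φ((v + t·q)⁻¹·(W + t·R)) equals −v times the second derivative at s = 0 of the function s ↦ Φ(v⁻¹W + s·ξ). -/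
open Matrix

attribute [local instance] Matrix.frobeniusNormedAddCommGroup Matrix.frobeniusNormedSpace

open Filter Topology in
theorem persp_aux_s10 (g : ℝ → ℝ) (hg : ContDiffAt ℝ 2 g 0) (v : ℝ) (hv : 0 < v) (u p q : ℝ) :
    iteratedDeriv 2 (fun t : ℝ => (u + t * p) - (v + t * q) * g (t * v / (v + t * q))) 0
      = -v * iteratedDeriv 2 g 0 := by
  have hv0 : v ≠ 0 := hv.ne'
  have hd : ∀ᶠ x in 𝓝 (0 : ℝ), DifferentiableAt ℝ g x := by
    filter_upwards [hg.eventually (by simp)] with x hx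
    exact hx.differentiableAt (by simp)
  have hd2 : DifferentiableAt ℝ (deriv g) 0 := by
    have h : ContDiffAt ℝ 1 (deriv g) 0 := hg.derivWithin (by norm_num)
    exact h.differentiableAt (by simp)
  have hl : ∀ t : ℝ, HasDerivAt (fun t : ℝ => v + t * q) q t := fun t => by
    simpa using ((hasDerivAt_id t).mul_const q).const_add v
  have hs : ∀ t : ℝ, v + t * q ≠ 0 →
      HasDerivAt (fun t : ℝ => t * v / (v + t * q)) (v ^ 2 / (v + t * q) ^ 2) t := fun t ht => by
    have h := ((hasDerivAt_id t).mul_const v).div (hl t) ht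
    refine h.congr_deriv ?_
    simp only [id]
    ring
  have hne : ∀ᶠ t in 𝓝 (0 : ℝ), v + t * q ≠ 0 :=
    (hl 0).continuousAt.eventually_ne (by simpa using hv0)
  have hs0 : Tendsto (fun t : ℝ => t * v / (v + t * q)) (𝓝 0) (𝓝 0) := by
    have h := (hs 0 (by simpa using hv0)).continuousAt.tendsto
    simpa using h
  have h1 : deriv (fun t : ℝ => (u + t * p) - (v + t * q) * g (t * v / (v + t * q))) =ᶠ[𝓝 0]
      fun t => p - (q * g (t * v / (v + t * q))
        + v ^ 2 * (deriv g (t * v / (v + t * q)) / (v + t * q))) := by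
    filter_upwards [hne, hs0.eventually hd] with t ht hgt
    have hu : HasDerivAt (fun t : ℝ => u + t * p) p t := by
      simpa using ((hasDerivAt_id t).mul_const p).const_add u
    have h := hu.sub ((hl t).mul (hgt.hasDerivAt.comp t (hs t ht)))
    refine (h.congr_deriv ?_).deriv
    simp only [Function.comp]
    field_simp
  have e0 : (0:ℝ) * v / (v + 0 * q) = 0 := by simp
  have hn0 : v + 0 * q ≠ 0 := by simpa using hv0
  have hg0 : HasDerivAt g (deriv g 0) (0 * v / (v + 0 * q)) := by
    rw [e0]; exact hd.self_of_nhds.hasDerivAt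
  have hg1 : HasDerivAt (deriv g) (deriv (deriv g) 0) (0 * v / (v + 0 * q)) := by
    rw [e0]; exact hd2.hasDerivAt
  have h2 := ((((hg0.comp 0 (hs 0 hn0)).const_mul q).add
    (((hg1.comp 0 (hs 0 hn0)).div (hl 0) hn0).const_mul (v ^ 2))).const_sub p)
  rw [iteratedDeriv_succ, iteratedDeriv_one, iteratedDeriv_succ, iteratedDeriv_one, h1.deriv_eq]
  refine (h2.congr_deriv ?_).deriv
  simp only [Function.comp, zero_mul, add_zero]
  field_simp
  ring

/-- If `Φ` is `C²` on an open subset of `𝕊ᵈ` containing `v⁻¹ W`, then the second derivative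
at `t = 0` of `t ↦ (u + t p) - (v + t q) Φ((v + t q)⁻¹ (W + t R))` equals `-v` times the
second derivative at `s = 0` of `s ↦ Φ(v⁻¹ W + s ξ)`, where `ξ = v⁻¹ (R - q v⁻¹ W)`. -/
theorem second_deriv_of_perspective_composition {d : ℕ} (Φ : SymMat d → ℝ)
    (U : Set (SymMat d)) (hU : IsOpen U) (hΦ : ContDiffOn ℝ 2 Φ U)
    (v : ℝ) (hv : 0 < v) (W : SymMat d) (hWU : v⁻¹ • W ∈ U)
    (u p q : ℝ) (R : SymMat d) :
    let ξ : SymMat d := v⁻¹ • (R - (q * v⁻¹) • W)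
    iteratedDeriv 2 (fun t : ℝ => (u + t * p) - (v + t * q) * Φ ((v + t * q)⁻¹ • (W + t • R))) 0
      = -v * iteratedDeriv 2 (fun s : ℝ => Φ (v⁻¹ • W + s • ξ)) 0 := by
  intro ξ
  have hg : ContDiffAt ℝ 2 (fun s : ℝ => Φ (v⁻¹ • W + s • ξ)) 0 := by
    have h1 : ContDiffAt ℝ 2 Φ (v⁻¹ • W + (0 : ℝ) • ξ) := by
      rw [zero_smul, add_zero]
      exact hΦ.contDiffAt (hU.mem_nhds hWU)
    have h2 : ContDiffAt ℝ 2 (fun s : ℝ => v⁻¹ • W + s • ξ) 0 :=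
      contDiffAt_const.add (contDiffAt_id.smul contDiffAt_const)
    exact h1.comp (0 : ℝ) h2
  rw [← persp_aux_s10 _ hg v hv u p q]
  apply Filter.EventuallyEq.iteratedDeriv_eq
  have hne : ∀ᶠ t in nhds (0 : ℝ), v + t * q ≠ 0 := by
    have hc : ContinuousAt (fun t : ℝ => v + t * q) 0 := by fun_prop
    exact hc.eventually_ne (by simpa using hv.ne')
  filter_upwards [hne] with t ht
  have e : (v + t * q)⁻¹ • (W + t • R) = v⁻¹ • W + (t * v / (v + t * q)) • ξ := by
    have hv0 := hv.ne'
    simp only [ξ]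
    match_scalars
    · field_simp
      ring
    · field_simp
  rw [e]
end

section
/- Let Φ be a real-valued function that is C³ (three times continuously differentiable) on an open subset of the d×d real symmetric matrices containing v⁻¹W, where v > 0 and W is a d×d real symmetric matrix. Let u, p, q ∈ ℝ and let R be a d×d real symmetric matrix, and set ξ = v⁻¹(R − q·v⁻¹·W). Then the third derivative at t = 0 of the function t ↦ (u + t·p) − (v + t·q)·Φ((v + t·q)⁻¹·(W + t·R)) equals −v·Φ₃ + 3q·Φ₂, where Φ₂ and Φ₃ denote respectively the second and third derivatives at s = 0 of the function s ↦ Φ(v⁻¹W + s·ξ). -/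
open Matrix

attribute [local instance] Matrix.frobeniusNormedAddCommGroup Matrix.frobeniusNormedSpace

theorem aux_persp (g : ℝ → ℝ) (hg : ContDiffAt ℝ 3 g 0) (v : ℝ) (hv : 0 < v) (u p q : ℝ) :
    iteratedDeriv 3 (fun t : ℝ => (u + t * p) - (v + t * q) * g (t * v / (v + t * q))) 0
      = -v * iteratedDeriv 3 g 0 + 3 * q * iteratedDeriv 2 g 0 := by
  have hev : ∀ᶠ s in nhds (0:ℝ), ContDiffAt ℝ 3 g s := hg.eventually (by decide)
  have hD : ∀ s, ContDiffAt ℝ 3 g s → ∀ k : ℕ, k < 3 →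
      HasDerivAt (iteratedDeriv k g) (iteratedDeriv (k+1) g s) s := by
    intro s hs k hk
    rw [iteratedDeriv_succ]
    apply DifferentiableAt.hasDerivAt
    rw [iteratedDeriv_eq_equiv_comp]
    exact (LinearIsometryEquiv.differentiable _).differentiableAt.comp s
      (hs.differentiableAt_iteratedFDeriv (by exact_mod_cast hk))
  have ha0 : ∀ᶠ t in nhds (0:ℝ), v + t * q ≠ 0 := by
    have : ContinuousAt (fun t : ℝ => v + t * q) 0 := by fun_prop
    exact this.eventually_ne (by simpa using hv.ne')
  have hsd : ∀ t, v + t * q ≠ 0 →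
      HasDerivAt (fun t : ℝ => t * v / (v + t * q)) (v^2 / (v + t*q)^2) t := by
    intro t ht
    have := ((hasDerivAt_id t).mul_const v).div (((hasDerivAt_id t).mul_const q).const_add v) ht
    refine this.congr_deriv ?_
    simp only [id]; field_simp; ring
  have had : ∀ t, HasDerivAt (fun t : ℝ => v + t * q) q t := by
    intro t
    simpa using ((hasDerivAt_id t).mul_const q).const_add v
  have hs0 : ∀ᶠ t in nhds (0:ℝ), ContDiffAt ℝ 3 g (t * v / (v + t * q)) := by
    have hc : ContinuousAt (fun t : ℝ => t * v / (v + t * q)) 0 :=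
      (hsd 0 (by simpa using hv.ne')).continuousAt
    have h2 := hc.tendsto
    simp only [zero_mul, zero_div] at h2
    exact h2.eventually hev
  have hcomp : ∀ t, v + t * q ≠ 0 → ContDiffAt ℝ 3 g (t * v / (v + t * q)) → ∀ k : ℕ, k < 3 →
      HasDerivAt (fun t : ℝ => iteratedDeriv k g (t * v / (v + t * q)))
        (iteratedDeriv (k+1) g (t * v / (v + t * q)) * (v^2 / (v + t*q)^2)) t := by
    intro t ht hs k hk
    exact (hD _ hs k hk).comp t (hsd t ht)
  rw [iteratedDeriv_succ, iteratedDeriv_succ, iteratedDeriv_one]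
  have e1 : deriv (fun t : ℝ => (u + t * p) - (v + t * q) * g (t * v / (v + t * q)))
      =ᶠ[nhds 0] fun t => p - q * iteratedDeriv 0 g (t * v / (v + t * q))
        - v^2 / (v + t * q) * iteratedDeriv 1 g (t * v / (v + t * q)) := by
    filter_upwards [ha0, hs0] with t ht hs
    have hc := hcomp t ht hs 0 (by norm_num)
    have h1 := (((hasDerivAt_id t).mul_const p).const_add u).sub ((had t).mul hc)
    simp only [iteratedDeriv_zero] at h1 ⊢
    refine (HasDerivAt.deriv h1).trans ?_
    field_simp
    try ring
  have e2 : deriv (fun t => p - q * iteratedDeriv 0 g (t * v / (v + t * q))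
        - v^2 / (v + t * q) * iteratedDeriv 1 g (t * v / (v + t * q)))
      =ᶠ[nhds 0] fun t => - (v^4 / (v + t * q)^3 * iteratedDeriv 2 g (t * v / (v + t * q))) := by
    filter_upwards [ha0, hs0] with t ht hs
    have h1 := (((hcomp t ht hs 0 (by norm_num)).const_mul q).const_sub p).sub
      (((hasDerivAt_const t (v^2)).div (had t) ht).mul (hcomp t ht hs 1 (by norm_num)))
    refine (HasDerivAt.deriv h1).trans ?_
    simp only [Nat.reduceAdd, Pi.div_apply]
    field_simp
    ring
  rw [(e1.deriv.trans e2).deriv_eq]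
  have h0 : v + 0 * q ≠ 0 := by simpa using hv.ne'
  have h1 := ((((hasDerivAt_const (0:ℝ) (v^4)).div ((had 0).pow 3) (pow_ne_zero 3 h0)).mul
    (hcomp 0 h0 (by simpa using hg) 2 (by norm_num)))).neg
  refine (HasDerivAt.deriv h1).trans ?_
  simp
  field_simp

/-- If `Φ` is `C³` on an open subset of `𝕊ᵈ` containing `v⁻¹ W`, then the third derivative
at `t = 0` of `t ↦ (u + t p) - (v + t q) Φ((v + t q)⁻¹ (W + t R))` equals `-v Φ₃ + 3 q Φ₂`,
where `Φ₂`, `Φ₃` are the second and third derivatives at `s = 0` of `s ↦ Φ(v⁻¹ W + s ξ)`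
and `ξ = v⁻¹ (R - q v⁻¹ W)`. -/
theorem third_deriv_of_perspective_composition {d : ℕ} (Φ : SymMat d → ℝ)
    (U : Set (SymMat d)) (hU : IsOpen U) (hΦ : ContDiffOn ℝ 3 Φ U)
    (v : ℝ) (hv : 0 < v) (W : SymMat d) (hWU : v⁻¹ • W ∈ U)
    (u p q : ℝ) (R : SymMat d) :
    let ξ : SymMat d := v⁻¹ • (R - (q * v⁻¹) • W)
    iteratedDeriv 3 (fun t : ℝ => (u + t * p) - (v + t * q) * Φ ((v + t * q)⁻¹ • (W + t • R))) 0
      = -v * iteratedDeriv 3 (fun s : ℝ => Φ (v⁻¹ • W + s • ξ)) 0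
        + 3 * q * iteratedDeriv 2 (fun s : ℝ => Φ (v⁻¹ • W + s • ξ)) 0 := by
  intro ξ
  have hg : ContDiffAt ℝ 3 (fun s : ℝ => Φ (v⁻¹ • W + s • ξ)) 0 := by
    have h1 : ContDiffAt ℝ 3 Φ (v⁻¹ • W + (0:ℝ) • ξ) := by
      rw [zero_smul, add_zero]
      exact hΦ.contDiffAt (hU.mem_nhds hWU)
    have h2 : ContDiffAt ℝ 3 (fun s : ℝ => v⁻¹ • W + s • ξ) 0 :=
      contDiffAt_const.add (contDiffAt_id.smul contDiffAt_const)
    exact ContDiffAt.comp (0:ℝ) h1 h2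
  rw [← aux_persp _ hg v hv u p q]
  apply Filter.EventuallyEq.iteratedDeriv_eq
  have ha0 : ∀ᶠ t in nhds (0:ℝ), v + t * q ≠ 0 := by
    have : ContinuousAt (fun t : ℝ => v + t * q) 0 := by fun_prop
    exact this.eventually_ne (by simpa using hv.ne')
  filter_upwards [ha0] with t ht
  have hv' := hv.ne'
  have : (v + t * q)⁻¹ • (W + t • R) = v⁻¹ • W + (t * v / (v + t * q)) • ξ := by
    simp only [ξ]
    match_scalars <;> field_simp <;> ring
  rw [this]
end
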